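/- (W_2-convergence characterization in Hilbert space.) Let H be a separable Hilbert space and let μ_n (n ≥ 1) and μ_∞ be Borel probability measures on H with finite second moments. The following are equivalent: (i) W_2(μ_n, μ_∞) → 0 as n → ∞; (ii) e_{2,2}(μ_n, ·) → e_{2,2}(μ_∞, ·) uniformly on H²; (iii) e_{2,2}(μ_n, ·) → e_{2,2}(μ_∞, ·) pointwise on H². -/

import Mathlib

open MeasureTheory Filter Topology
open scoped ENNReal NNReal

/-- The `L^p`-quantization error function at level `N`. -/
noncomputable def quantErr {E : Type*} [NormedAddCommGroup E] [MeasurableSpace E]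
    (p : ℝ) (N : ℕ) (μ : Measure E) (x : Fin N → E) : ℝ :=
  (∫⁻ ξ, ⨅ i, (‖ξ - x i‖₊ : ℝ≥0∞) ^ p ∂μ).toReal ^ (1 / p)

/-- The `L^p`-Wasserstein distance. -/
noncomputable def wassersteinDist {E : Type*} [NormedAddCommGroup E] [MeasurableSpace E]
    (p : ℝ) (μ ν : Measure E) : ℝ :=
  (⨅ π ∈ {π : Measure (E × E) | π.map Prod.fst = μ ∧ π.map Prod.snd = ν},
      ∫⁻ q, (‖q.1 - q.2‖₊ : ℝ≥0∞) ^ p ∂π).toReal ^ (1 / p)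

/-- `μ` has a finite `p`-th moment. -/
def HasFiniteMoment {E : Type*} [NormedAddCommGroup E] [MeasurableSpace E]
    (p : ℝ) (μ : Measure E) : Prop :=
  ∫⁻ ξ, (‖ξ‖₊ : ℝ≥0∞) ^ p ∂μ ≠ ∞


lemma aux_countable_atoms (ν : Measure ℝ) [IsProbabilityMeasure ν] :
    Dense {x : ℝ | ν {x} = 0} := by
  have h := Measure.countable_meas_pos_of_disjoint_iUnion (μ := ν) (As := fun x : ℝ => ({x} : Set ℝ))
    (fun x => measurableSet_singleton x) (fun x y hxy => by simpa using hxy)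
  have := h.dense_compl ℝ
  convert this using 1
  ext x; simp

lemma aux_max_upper (s c h : ℝ) (hh : 0 < h) :
    h * (Set.Ioi c).indicator 1 s ≤ max (s - (c - h)) 0 - max (s - c) 0 := by
  by_cases hs : c < s
  · rw [Set.indicator_of_mem (by exact hs), max_eq_left (by linarith), max_eq_left (by linarith)]
    simp
  · rw [Set.indicator_of_notMem (by exact hs), max_eq_right (b := (0:ℝ)) (a := s - c) (by linarith)]
    simp

lemma aux_max_lower (s c h : ℝ) (hh : 0 < h) :
    max (s - c) 0 - max (s - (c + h)) 0 ≤ h * (Set.Ioi c).indicator 1 s := by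
  by_cases hs : c < s
  · rw [Set.indicator_of_mem (by exact hs), max_eq_left (by linarith)]
    have := le_max_left (s - (c + h)) 0
    simp only [Pi.one_apply]
    linarith
  · rw [Set.indicator_of_notMem (by exact hs), max_eq_right (b := (0:ℝ)) (a := s - c) (by linarith)]
    simp

lemma aux_int_max (ν : Measure ℝ) [IsProbabilityMeasure ν] (hi : Integrable (fun s : ℝ => s) ν)
    (c : ℝ) : Integrable (fun s => max (s - c) 0) ν :=
  (hi.sub (integrable_const c)).sup (integrable_const 0)

lemma aux_upper (ν : Measure ℝ) [IsProbabilityMeasure ν] (hi : Integrable (fun s : ℝ => s) ν)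
    (c h : ℝ) (hh : 0 < h) :
    h * ν.real (Set.Ioi c) ≤ ∫ s, max (s - (c - h)) 0 ∂ν - ∫ s, max (s - c) 0 ∂ν := by
  rw [← integral_sub (aux_int_max ν hi _) (aux_int_max ν hi _), ← integral_indicator_one measurableSet_Ioi,
    ← integral_const_mul]
  refine integral_mono ?_ ((aux_int_max ν hi _).sub (aux_int_max ν hi _)) (fun s => aux_max_upper s c h hh)
  exact ((integrable_const (1:ℝ)).indicator measurableSet_Ioi).const_mul h

lemma aux_lower (ν : Measure ℝ) [IsProbabilityMeasure ν] (hi : Integrable (fun s : ℝ => s) ν)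
    (c h : ℝ) (hh : 0 < h) :
    ∫ s, max (s - c) 0 ∂ν - ∫ s, max (s - (c + h)) 0 ∂ν ≤ h * ν.real (Set.Ioi c) := by
  rw [← integral_sub (aux_int_max ν hi _) (aux_int_max ν hi _), ← integral_indicator_one measurableSet_Ioi,
    ← integral_const_mul]
  refine integral_mono ((aux_int_max ν hi _).sub (aux_int_max ν hi _)) ?_ (fun s => aux_max_lower s c h hh)
  exact ((integrable_const (1:ℝ)).indicator measurableSet_Ioi).const_mul h

lemma aux_Ioi (ν : ℕ → Measure ℝ) (ν' : Measure ℝ) [∀ n, IsProbabilityMeasure (ν n)]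
    [IsProbabilityMeasure ν'] (hi : ∀ n, Integrable (fun s : ℝ => s) (ν n))
    (hi' : Integrable (fun s : ℝ => s) ν')
    (hc : ∀ c : ℝ, Tendsto (fun n => ∫ s, max (s - c) 0 ∂(ν n)) atTop (𝓝 (∫ s, max (s - c) 0 ∂ν')))
    (c : ℝ) (h0 : ν' {c} = 0) :
    Tendsto (fun n => (ν n).real (Set.Ioi c)) atTop (𝓝 (ν'.real (Set.Ioi c))) := by
  have hcont : ContinuousAt (fun t => ν'.real (Set.Ioi t)) c := by
    have e : (fun t => ν'.real (Set.Ioi t)) = fun t => 1 - ProbabilityTheory.cdf ν' t := by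
      funext t
      rw [ProbabilityTheory.cdf_eq_real, ← Set.compl_Iic, probReal_compl_eq_one_sub measurableSet_Iic]
    rw [e]
    refine continuousAt_const.sub ?_
    have hs := (ProbabilityTheory.cdf ν').measure_singleton c
    rw [ProbabilityTheory.measure_cdf, h0, eq_comm, ENNReal.ofReal_eq_zero] at hs
    have hl := (ProbabilityTheory.cdf ν').mono.leftLim_le (le_refl c)
    rw [continuousAt_iff_continuous_left'_right']
    refine ⟨((ProbabilityTheory.cdf ν').mono.continuousWithinAt_Iio_iff_leftLim_eq).2
      (by linarith), ?_⟩
    exact ((ProbabilityTheory.cdf ν').right_continuous c).mono Set.Ioi_subset_Ici_self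
  rw [Metric.tendsto_atTop]
  intro ε hε
  obtain ⟨δ, hδ, hd⟩ := Metric.continuousAt_iff.1 hcont (ε / 2) (by linarith)
  set h := δ / 2 with hh
  have hh0 : 0 < h := by positivity
  have h1 := hd (x := c - h) (by simp [Real.dist_eq, abs_of_pos hh0]; linarith)
  have h2 := hd (x := c + h) (by simp [Real.dist_eq, abs_of_pos hh0]; linarith)
  rw [Real.dist_eq, abs_lt] at h1 h2
  have u1 := aux_lower ν' hi' (c - h) h hh0
  have u2 := aux_upper ν' hi' (c + h) h hh0
  rw [sub_add_cancel] at u1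
  rw [add_sub_cancel_right] at u2
  have t1 := ((hc (c - h)).sub (hc c)).eventually_lt_const
    (u := h * (ν'.real (Set.Ioi c) + ε)) (by nlinarith)
  have t2 := ((hc c).sub (hc (c + h))).eventually_const_lt
    (u := h * (ν'.real (Set.Ioi c) - ε)) (by nlinarith)
  obtain ⟨N, hN⟩ := eventually_atTop.1 (t1.and t2)
  refine ⟨N, fun n hn => ?_⟩
  obtain ⟨g1, g2⟩ := hN n hn
  have v1 := aux_upper (ν n) (hi n) c h hh0
  have v2 := aux_lower (ν n) (hi n) c h hh0
  have w1 := lt_of_mul_lt_mul_left (v1.trans_lt g1) hh0.le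
  have w2 := lt_of_mul_lt_mul_left (g2.trans_le v2) hh0.le
  rw [Real.dist_eq, abs_lt]
  constructor <;> linarith

lemma conv1d (ν : ℕ → ProbabilityMeasure ℝ) (ν' : ProbabilityMeasure ℝ)
    (hi : ∀ n, Integrable (fun s : ℝ => s) (ν n : Measure ℝ))
    (hi' : Integrable (fun s : ℝ => s) (ν' : Measure ℝ))
    (hc : ∀ c : ℝ, Tendsto (fun n => ∫ s, max (s - c) 0 ∂(ν n : Measure ℝ)) atTop
      (𝓝 (∫ s, max (s - c) 0 ∂(ν' : Measure ℝ)))) :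
    Tendsto ν atTop (𝓝 ν') := by
  have hS : IsPiSystem {A : Set ℝ | ∃ a b : ℝ, (ν' : Measure ℝ) {a} = 0 ∧ (ν' : Measure ℝ) {b} = 0 ∧
      a ≤ b ∧ A = Set.Ioc a b} := by
    rintro _ ⟨a, b, ha, hb, hab, rfl⟩ _ ⟨c, d, hc, hd, hcd, rfl⟩ hne
    rw [Set.Ioc_inter_Ioc] at hne ⊢
    refine ⟨a ⊔ c, b ⊓ d, ?_, ?_, ?_, rfl⟩
    · rcases max_choice a c with h | h <;> rw [h] <;> assumption
    · rcases min_choice b d with h | h <;> rw [h] <;> assumption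
    · obtain ⟨x, hx⟩ := hne
      exact hx.1.le.trans hx.2
  refine hS.tendsto_probabilityMeasure_of_tendsto_of_mem ?_ ?_ ?_
  · rintro _ ⟨a, b, -, -, -, rfl⟩; exact measurableSet_Ioc
  · intro u hu x hx
    obtain ⟨ε, hε, hb⟩ := Metric.isOpen_iff.1 hu x hx
    have hd := aux_countable_atoms (ν' : Measure ℝ)
    obtain ⟨a, ha, hax⟩ := hd.exists_mem_open isOpen_Ioo (show (Set.Ioo (x - ε) x).Nonempty from
      Set.nonempty_Ioo.2 (by linarith))
    obtain ⟨b, hb0, hbx⟩ := hd.exists_mem_open isOpen_Ioo (show (Set.Ioo x (x + ε)).Nonempty from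
      Set.nonempty_Ioo.2 (by linarith))
    refine ⟨_, ⟨a, b, ha, hb0, (hax.2.trans hbx.1).le, rfl⟩, Ioc_mem_nhds hax.2 hbx.1, ?_⟩
    intro y hy
    apply hb
    rw [Metric.mem_ball, Real.dist_eq, abs_lt]
    constructor <;> linarith [hy.1, hy.2, hax.1, hbx.2]
  · rintro _ ⟨a, b, ha, hb, hab, rfl⟩
    have key : ∀ (m : ProbabilityMeasure ℝ), ((m (Set.Ioc a b) : ℝ≥0) : ℝ) =
        (m : Measure ℝ).real (Set.Ioi a) - (m : Measure ℝ).real (Set.Ioi b) := by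
      intro m
      rw [← measureReal_diff (Set.Ioi_subset_Ioi hab) measurableSet_Ioi, Set.Ioi_diff_Ioi]
      rfl
    rw [← NNReal.tendsto_coe]
    simp_rw [key]
    exact (aux_Ioi (fun n => (ν n : Measure ℝ)) ν' hi hi' hc a ha).sub
      (aux_Ioi (fun n => (ν n : Measure ℝ)) ν' hi hi' hc b hb)

section Hilb
variable {H : Type*} [NormedAddCommGroup H] [MeasurableSpace H] 

lemma quantErr_eq [BorelSpace H] [TopologicalSpace.SeparableSpace H] (μ : Measure H) (x : Fin 2 → H) :
    quantErr 2 2 μ x = (∫ ξ, min (‖ξ - x 0‖ ^ 2) (‖ξ - x 1‖ ^ 2) ∂μ) ^ (1 / 2 : ℝ) := by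
  unfold quantErr
  rw [integral_eq_lintegral_of_nonneg_ae (Eventually.of_forall fun ξ => by positivity)]
  · congr 2
    refine lintegral_congr fun ξ => ?_
    have hp : ∀ y : H, ((‖y‖₊ : ℝ≥0∞)) ^ (2 : ℝ) = ENNReal.ofReal (‖y‖ ^ 2) := by
      intro y
      rw [ENNReal.ofReal_pow (norm_nonneg _), ofReal_norm, ← ENNReal.rpow_natCast]
      rfl
    simp_rw [hp]
    rw [ENNReal.ofReal_min]
    apply le_antisymm
    · exact le_min (iInf_le _ 0) (iInf_le _ 1)
    · refine le_iInf fun i => ?_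
      fin_cases i
      · exact min_le_left _ _
      · exact min_le_right _ _
  · fun_prop

lemma integrable_sq_norm [BorelSpace H] [TopologicalSpace.SeparableSpace H] {μ : Measure H}
    (h : HasFiniteMoment 2 μ) : Integrable (fun ξ => ‖ξ‖ ^ 2) μ := by
  refine ⟨by fun_prop, ?_⟩
  unfold HasFiniteMoment at h
  rw [hasFiniteIntegral_iff_ofReal (Eventually.of_forall fun ξ => by positivity)]
  convert lt_top_iff_ne_top.2 h using 1
  refine lintegral_congr fun ξ => ?_
  rw [ENNReal.ofReal_pow (norm_nonneg _), ofReal_norm, ← ENNReal.rpow_natCast]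
  rfl

lemma integrable_sub_sq [BorelSpace H] [TopologicalSpace.SeparableSpace H] {μ : Measure H}
    [IsProbabilityMeasure μ]
    (h : Integrable (fun ξ => ‖ξ‖ ^ 2) μ) (a : H) : Integrable (fun ξ => ‖ξ - a‖ ^ 2) μ := by
  refine ((h.const_mul 2).add (integrable_const (2 * ‖a‖ ^ 2))).mono' (by fun_prop) ?_
  refine Eventually.of_forall fun ξ => ?_
  simp only [Pi.add_apply, Real.norm_eq_abs, abs_pow, abs_norm]
  have := norm_sub_le ξ a
  nlinarith [norm_nonneg (ξ - a), norm_nonneg ξ, norm_nonneg a, sq_nonneg (‖ξ‖ - ‖a‖)]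

lemma integrable_nrm [BorelSpace H] [TopologicalSpace.SeparableSpace H] {μ : Measure H}
    [IsProbabilityMeasure μ]
    (h : Integrable (fun ξ => ‖ξ‖ ^ 2) μ) : Integrable (fun ξ : H => ‖ξ‖) μ := by
  refine (h.add (integrable_const 1)).mono' (by fun_prop) ?_
  refine Eventually.of_forall fun ξ => ?_
  simp only [Pi.add_apply, norm_norm]
  nlinarith [sq_nonneg (‖ξ‖ - 1), sq_nonneg (‖ξ‖)]

lemma conv_min [BorelSpace H] [TopologicalSpace.SeparableSpace H] (μ : ℕ → Measure H) (μ' : Measure H)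
    (hx : ∀ x : Fin 2 → H,
        Tendsto (fun n => quantErr 2 2 (μ n) x) atTop (𝓝 (quantErr 2 2 μ' x))) (a b : H) :
    Tendsto (fun n => ∫ ξ, min (‖ξ - a‖ ^ 2) (‖ξ - b‖ ^ 2) ∂(μ n)) atTop
      (𝓝 (∫ ξ, min (‖ξ - a‖ ^ 2) (‖ξ - b‖ ^ 2) ∂μ')) := by
  have h := (hx ![a, b]).pow 2
  simp_rw [quantErr_eq] at h
  have e : ∀ ν : Measure H, ((∫ ξ, min (‖ξ - a‖ ^ 2) (‖ξ - b‖ ^ 2) ∂ν) ^ (1 / 2 : ℝ)) ^ 2 =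
      ∫ ξ, min (‖ξ - a‖ ^ 2) (‖ξ - b‖ ^ 2) ∂ν := by
    intro ν
    rw [← Real.sqrt_eq_rpow, Real.sq_sqrt]
    exact integral_nonneg fun ξ => by positivity
  simp only [Matrix.cons_val_zero, Matrix.cons_val_one, e] at h
  exact h

variable [InnerProductSpace ℝ H]

lemma conv_max [BorelSpace H] [TopologicalSpace.SeparableSpace H] (μ : ℕ → Measure H) (μ' : Measure H)
    [∀ n, IsProbabilityMeasure (μ n)] [IsProbabilityMeasure μ']
    (hμ : ∀ n, Integrable (fun ξ => ‖ξ‖ ^ 2) (μ n)) (hμ' : Integrable (fun ξ => ‖ξ‖ ^ 2) μ')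
    (hx : ∀ a b : H, Tendsto (fun n => ∫ ξ, min (‖ξ - a‖ ^ 2) (‖ξ - b‖ ^ 2) ∂(μ n)) atTop
      (𝓝 (∫ ξ, min (‖ξ - a‖ ^ 2) (‖ξ - b‖ ^ 2) ∂μ'))) (u : H) (c : ℝ) :
    Tendsto (fun n => ∫ ξ, max (inner ℝ u ξ - c) 0 ∂(μ n)) atTop
      (𝓝 (∫ ξ, max (inner ℝ u ξ - c) 0 ∂μ')) := by
  by_cases hu : u = 0
  · simp [hu]
  have hu' : ‖u‖ ≠ 0 := by simpa using hu
  set t : ℝ := (2 * c / ‖u‖ ^ 2 - 1) / 2 with ht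
  have hc : c = (2 * t + 1) * ‖u‖ ^ 2 / 2 := by rw [ht]; field_simp; ring
  have e : ∀ ξ : H, max (inner ℝ u ξ - c) 0 = (1 / 2) * (min (‖ξ - t • u‖ ^ 2) (‖ξ - t • u‖ ^ 2)
      - min (‖ξ - t • u‖ ^ 2) (‖ξ - (t + 1) • u‖ ^ 2)) := by
    intro ξ
    have e1 : ∀ s : ℝ, ‖ξ - s • u‖ ^ 2 = ‖ξ‖ ^ 2 - 2 * s * inner ℝ u ξ + s ^ 2 * ‖u‖ ^ 2 := by
      intro s
      rw [norm_sub_sq_real, inner_smul_right, norm_smul, real_inner_comm, mul_pow]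
      simp; ring
    rw [min_self, ← max_sub_sub_left, sub_self, e1, e1, hc]
    rw [max_comm, mul_max_of_nonneg _ _ (by norm_num : (0:ℝ) ≤ 1 / 2), mul_zero]
    congr 1
    ring
  have e2 : ∀ (ν : Measure H) [IsProbabilityMeasure ν], Integrable (fun ξ => ‖ξ‖ ^ 2) ν →
      ∫ ξ, max (inner ℝ u ξ - c) 0 ∂ν =
      (1 / 2) * (∫ ξ, min (‖ξ - t • u‖ ^ 2) (‖ξ - t • u‖ ^ 2) ∂ν
      - ∫ ξ, min (‖ξ - t • u‖ ^ 2) (‖ξ - (t + 1) • u‖ ^ 2) ∂ν) := by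
    intro ν _ hν
    simp_rw [e]
    rw [integral_const_mul, integral_sub]
    · exact (integrable_sub_sq hν _).inf (integrable_sub_sq hν _)
    · exact (integrable_sub_sq hν _).inf (integrable_sub_sq hν _)
  rw [e2 μ' hμ']
  simp_rw [fun n => e2 (μ n) (hμ n)]
  exact ((hx _ _).sub (hx _ _)).const_mul _

lemma conv_charFun [BorelSpace H] [TopologicalSpace.SeparableSpace H] (μ : ℕ → Measure H) (μ' : Measure H)
    [∀ n, IsProbabilityMeasure (μ n)] [IsProbabilityMeasure μ']
    (hμ : ∀ n, Integrable (fun ξ => ‖ξ‖ ^ 2) (μ n)) (hμ' : Integrable (fun ξ => ‖ξ‖ ^ 2) μ')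
    (u : H) (hx : ∀ c : ℝ, Tendsto (fun n => ∫ ξ, max (inner ℝ u ξ - c) 0 ∂(μ n)) atTop
      (𝓝 (∫ ξ, max (inner ℝ u ξ - c) 0 ∂μ'))) :
    Tendsto (fun n => charFun (μ n) u) atTop (𝓝 (charFun μ' u)) := by
  have hm : Measurable (fun ξ : H => inner ℝ u ξ) := by fun_prop
  have hint : ∀ (ν : Measure H) [IsProbabilityMeasure ν], Integrable (fun ξ => ‖ξ‖ ^ 2) ν →
      Integrable (fun s : ℝ => s) (ν.map (fun ξ : H => inner ℝ u ξ)) := by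
    intro ν _ hν
    rw [integrable_map_measure (by fun_prop) hm.aemeasurable]
    refine ((integrable_nrm hν).const_mul ‖u‖).mono' (by fun_prop) (Eventually.of_forall fun ξ => ?_)
    exact norm_inner_le_norm u ξ
  have hp : ∀ n, IsProbabilityMeasure ((μ n).map (fun ξ : H => inner ℝ u ξ)) := fun n =>
    Measure.isProbabilityMeasure_map hm.aemeasurable
  have hp' : IsProbabilityMeasure (μ'.map (fun ξ : H => inner ℝ u ξ)) :=
    Measure.isProbabilityMeasure_map hm.aemeasurable
  have := conv1d (fun n => ⟨(μ n).map (fun ξ : H => inner ℝ u ξ), hp n⟩)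
    ⟨μ'.map (fun ξ : H => inner ℝ u ξ), hp'⟩ (fun n => hint _ (hμ n)) (hint _ hμ') (by
      intro c
      have e3 : ∀ (ν : Measure H), ∫ s, max (s - c) 0 ∂(ν.map (fun ξ : H => inner ℝ u ξ)) =
        ∫ ξ, max (inner ℝ u ξ - c) 0 ∂ν := fun ν => 
          integral_map hm.aemeasurable (by fun_prop)
      simp only [ProbabilityMeasure.coe_mk, e3]
      exact hx c)
  have h1 := (ProbabilityMeasure.tendsto_iff_tendsto_charFun.1 this) 1
  have e : ∀ ν : Measure H, charFun (ν.map (fun ξ : H => inner ℝ u ξ)) 1 = charFun ν u := by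
    intro ν
    rw [charFun_apply, charFun_apply, integral_map hm.aemeasurable (by fun_prop)]
    simp [real_inner_comm]
  simpa only [ProbabilityMeasure.coe_mk, e] using h1

end Hilb

section Trunc

lemma trunc_tendsto {Ω : Type*} [MeasurableSpace Ω] {μ : Measure Ω} {f : Ω → ℝ}
    (hf : Integrable f μ) (h0 : ∀ x, 0 ≤ f x) :
    Tendsto (fun k : ℕ => ∫ x, min (f x) k ∂μ) atTop (𝓝 (∫ x, f x ∂μ)) := by
  refine tendsto_integral_of_dominated_convergence f
    (fun n => hf.aestronglyMeasurable.inf aestronglyMeasurable_const) hf ?_ ?_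
  · intro n
    refine Eventually.of_forall fun x => ?_
    rw [Real.norm_eq_abs, abs_of_nonneg (le_min (h0 x) (Nat.cast_nonneg n))]
    exact min_le_left _ _
  · refine Eventually.of_forall fun x => ?_
    refine tendsto_const_nhds.congr' ?_
    filter_upwards [eventually_ge_atTop ⌈f x⌉₊] with n hn
    rw [min_eq_left (Nat.ceil_le.1 hn)]

lemma conv_bdd {Ω : Type*} [MeasurableSpace Ω] [TopologicalSpace Ω] [OpensMeasurableSpace Ω]
    {μ : ℕ → ProbabilityMeasure Ω} {μ' : ProbabilityMeasure Ω} (h : Tendsto μ atTop (𝓝 μ'))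
    (f : Ω → ℝ) (hf : Continuous f) (C : ℝ) (hC : ∀ x, ‖f x‖ ≤ C) :
    Tendsto (fun n => ∫ x, f x ∂(μ n : Measure Ω)) atTop (𝓝 (∫ x, f x ∂(μ' : Measure Ω))) :=
  ProbabilityMeasure.tendsto_iff_forall_integral_tendsto.1 h
    (BoundedContinuousFunction.ofNormedAddCommGroup f hf C hC)

end Trunc

section Weak
variable {H : Type*} [NormedAddCommGroup H] [InnerProductSpace ℝ H] [MeasurableSpace H]
  [BorelSpace H] [TopologicalSpace.SeparableSpace H]

lemma exists_fd [CompleteSpace H] (μ' : Measure H) [IsProbabilityMeasure μ']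
    (hμ' : Integrable (fun ξ => ‖ξ‖ ^ 2) μ') (ε : ℝ) (hε : 0 < ε) :
    ∃ V : Submodule ℝ H, ∃ _ : FiniteDimensional ℝ V,
      ∫ ξ, ‖ξ - V.starProjection ξ‖ ^ 2 ∂μ' < ε := by
  let U : ℕ → Submodule ℝ H := fun n =>
    Submodule.span ℝ (TopologicalSpace.denseSeq H '' (Set.Iic n))
  have hfd : ∀ n, FiniteDimensional ℝ (U n) := fun n =>
    FiniteDimensional.span_of_finite ℝ ((Set.finite_Iic n).image _)
  have hmono : Monotone U := fun m n hmn =>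
    Submodule.span_mono (Set.image_mono (Set.Iic_subset_Iic.2 hmn))
  have hdense : ⊤ ≤ (⨆ t, U t).topologicalClosure := by
    intro x _
    have := TopologicalSpace.denseRange_denseSeq H x
    refine closure_mono ?_ this
    rintro _ ⟨n, rfl⟩
    exact (le_iSup U n) (Submodule.subset_span ⟨n, by simp, rfl⟩)
  have ht : Tendsto (fun n => ∫ ξ, ‖ξ - (U n).starProjection ξ‖ ^ 2 ∂μ') atTop (𝓝 (∫ _, 0 ∂μ')) := by
    refine tendsto_integral_of_dominated_convergence (fun ξ => ‖ξ‖ ^ 2) (fun n => ?_) hμ' ?_ ?_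
    · fun_prop
    · intro n
      refine Eventually.of_forall fun ξ => ?_
      have := Submodule.norm_sq_eq_add_norm_sq_starProjection ξ (U n)
      rw [Submodule.starProjection_orthogonal_val] at this
      simp only [Real.norm_eq_abs, abs_pow, abs_norm]
      nlinarith [norm_nonneg ((U n).starProjection ξ)]
    · refine Eventually.of_forall fun ξ => ?_
      have := (tendsto_const_nhds (x := ξ)).sub (Submodule.starProjection_tendsto_self U hmono ξ hdense)
      simpa using (this.norm).pow 2
  rw [integral_zero] at ht
  obtain ⟨n, hn⟩ := (ht.eventually_lt_const hε).exists
  exact ⟨U n, hfd n, hn⟩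

lemma conv_fd (μ : ℕ → Measure H) (μ' : Measure H)
    [∀ n, IsProbabilityMeasure (μ n)] [IsProbabilityMeasure μ']
    (hx : ∀ u, Tendsto (fun n => charFun (μ n) u) atTop (𝓝 (charFun μ' u)))
    (V : Submodule ℝ H) [FiniteDimensional ℝ V] (f : H → ℝ) (hf : Continuous f) (C : ℝ)
    (hC : ∀ x, ‖f x‖ ≤ C) :
    Tendsto (fun n => ∫ ξ, f (V.starProjection ξ) ∂(μ n)) atTop
      (𝓝 (∫ ξ, f (V.starProjection ξ) ∂μ')) := by
  have hm : Measurable (fun ξ : H => V.orthogonalProjection ξ) := by fun_prop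
  have hp : ∀ n, IsProbabilityMeasure ((μ n).map (fun ξ : H => V.orthogonalProjection ξ)) := fun n =>
    Measure.isProbabilityMeasure_map hm.aemeasurable
  have hp' : IsProbabilityMeasure (μ'.map (fun ξ : H => V.orthogonalProjection ξ)) :=
    Measure.isProbabilityMeasure_map hm.aemeasurable
  have e : ∀ (ν : Measure H) (v : V), charFun (ν.map (fun ξ : H => V.orthogonalProjection ξ)) v
      = charFun ν (v : H) := by
    intro ν v
    rw [charFun_apply, charFun_apply, integral_map hm.aemeasurable (by fun_prop)]
    refine integral_congr_ae (Eventually.of_forall fun ξ => ?_)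
    simp
  let νs : ℕ → ProbabilityMeasure V := fun n => ⟨(μ n).map (fun ξ : H => V.orthogonalProjection ξ), hp n⟩
  let ν' : ProbabilityMeasure V := ⟨μ'.map (fun ξ : H => V.orthogonalProjection ξ), hp'⟩
  have hw : Tendsto νs atTop (𝓝 ν') := by
    rw [ProbabilityMeasure.tendsto_iff_tendsto_charFun]
    intro v
    simp only [νs, ν', ProbabilityMeasure.coe_mk, e]
    exact hx v
  have := conv_bdd hw (fun v => f (v : H)) (by fun_prop) C (fun v => hC _)
  have e3 : ∀ ν : Measure H, ∫ v, f (v : H) ∂(ν.map (fun ξ : H => V.orthogonalProjection ξ)) =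
      ∫ ξ, f (V.starProjection ξ) ∂ν := by
    intro ν
    rw [integral_map hm.aemeasurable (by fun_prop)]
    rfl
  simpa only [νs, ν', ProbabilityMeasure.coe_mk, e3] using this

lemma int_starProj (ν : Measure H) (V : Submodule ℝ H) [FiniteDimensional ℝ V]
    (hν : Integrable (fun ξ => ‖ξ‖ ^ 2) ν) :
    Integrable (fun ξ => ‖V.starProjection ξ‖ ^ 2) ν ∧
    Integrable (fun ξ => ‖ξ - V.starProjection ξ‖ ^ 2) ν ∧
    ∫ ξ, ‖ξ - V.starProjection ξ‖ ^ 2 ∂ν = ∫ ξ, ‖ξ‖ ^ 2 ∂ν - ∫ ξ, ‖V.starProjection ξ‖ ^ 2 ∂ν := by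
  have key : ∀ ξ : H, ‖ξ - V.starProjection ξ‖ ^ 2 = ‖ξ‖ ^ 2 - ‖V.starProjection ξ‖ ^ 2 := by
    intro ξ
    have := Submodule.norm_sq_eq_add_norm_sq_starProjection ξ V
    rw [Submodule.starProjection_orthogonal_val] at this
    linarith
  have h1 : Integrable (fun ξ => ‖V.starProjection ξ‖ ^ 2) ν := by
    refine hν.mono' (by fun_prop) (Eventually.of_forall fun ξ => ?_)
    simp only [Real.norm_eq_abs, abs_pow, abs_norm]
    nlinarith [key ξ, sq_nonneg ‖ξ - V.starProjection ξ‖]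
  refine ⟨h1, ?_, ?_⟩
  · simp_rw [key]; exact hν.sub h1
  · simp_rw [key]; exact integral_sub hν h1

lemma tail_small [CompleteSpace H] (μ : ℕ → Measure H) (μ' : Measure H)
    [∀ n, IsProbabilityMeasure (μ n)] [IsProbabilityMeasure μ']
    (hμ : ∀ n, Integrable (fun ξ => ‖ξ‖ ^ 2) (μ n)) (hμ' : Integrable (fun ξ => ‖ξ‖ ^ 2) μ')
    (hx : ∀ u, Tendsto (fun n => charFun (μ n) u) atTop (𝓝 (charFun μ' u)))
    (hs : Tendsto (fun n => ∫ ξ, ‖ξ‖ ^ 2 ∂(μ n)) atTop (𝓝 (∫ ξ, ‖ξ‖ ^ 2 ∂μ')))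
    (ε : ℝ) (hε : 0 < ε) :
    ∃ V : Submodule ℝ H, ∃ _ : FiniteDimensional ℝ V,
      ∫ ξ, ‖ξ - V.starProjection ξ‖ ^ 2 ∂μ' < ε ∧
      ∀ᶠ n in atTop, ∫ ξ, ‖ξ - V.starProjection ξ‖ ^ 2 ∂(μ n) < ε := by
  obtain ⟨V, hV, hVε⟩ := exists_fd μ' hμ' (ε / 2) (by linarith)
  refine ⟨V, hV, by linarith, ?_⟩
  obtain ⟨h1, h2, h3⟩ := int_starProj μ' V hμ'
  obtain ⟨k, hk⟩ := ((trunc_tendsto h1 (fun x => by positivity)).eventually_const_lt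
    (u := ∫ ξ, ‖V.starProjection ξ‖ ^ 2 ∂μ' - ε / 4) (by linarith)).exists
  have hc := conv_fd μ μ' hx V (fun y => min (‖y‖ ^ 2) k) (by fun_prop) k (fun x => by
    rw [Real.norm_eq_abs, abs_of_nonneg (by positivity)]; exact min_le_right _ _)
  filter_upwards [hc.eventually_const_lt hk, hs.eventually_lt_const
    (u := ∫ ξ, ‖ξ‖ ^ 2 ∂μ' + ε / 4) (by linarith)] with n hn1 hn2
  obtain ⟨g1, g2, g3⟩ := int_starProj (μ n) V (hμ n)
  have : ∫ ξ, min (‖V.starProjection ξ‖ ^ 2) k ∂(μ n) ≤ ∫ ξ, ‖V.starProjection ξ‖ ^ 2 ∂(μ n) :=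
    integral_mono (g1.inf (integrable_const _)) g1 (fun ξ => min_le_left _ _)
  linarith

lemma lip_bound (ν : Measure H) [IsProbabilityMeasure ν] (V : Submodule ℝ H) [FiniteDimensional ℝ V]
    (hν : Integrable (fun ξ => ‖ξ‖ ^ 2) ν) (f : H → ℝ) (L : ℝ≥0) (hL : LipschitzWith L f)
    (C : ℝ) (hC : ∀ x, ‖f x‖ ≤ C) (η : ℝ) (hη : 0 < η)
    (hs : ∫ ξ, ‖ξ - V.starProjection ξ‖ ^ 2 ∂ν < η ^ 2) :
    |∫ ξ, f ξ ∂ν - ∫ ξ, f (V.starProjection ξ) ∂ν| ≤ 2 * L * η := by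
  have hfc := hL.continuous
  have i1 : Integrable f ν := (integrable_const C).mono' (by fun_prop) (Eventually.of_forall hC)
  have i2 : Integrable (fun ξ => f (V.starProjection ξ)) ν :=
    (integrable_const C).mono' (by fun_prop) (Eventually.of_forall fun ξ => hC _)
  rw [← integral_sub i1 i2, ← Real.norm_eq_abs]
  obtain ⟨g1, g2, g3⟩ := int_starProj ν V hν
  have hb : ∀ ξ, ‖f ξ - f (V.starProjection ξ)‖ ≤ L * (η + η⁻¹ * ‖ξ - V.starProjection ξ‖ ^ 2) := by
    intro ξ
    have h1 := hL.dist_le_mul ξ (V.starProjection ξ)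
    rw [dist_eq_norm, dist_eq_norm] at h1
    refine h1.trans (mul_le_mul_of_nonneg_left ?_ L.2)
    set t := ‖ξ - V.starProjection ξ‖
    rw [← sub_nonneg]
    have : η + η⁻¹ * t ^ 2 - t = η⁻¹ * (η ^ 2 + t ^ 2 - η * t) := by field_simp
    rw [this]
    have : 0 ≤ η ^ 2 + t ^ 2 - η * t := by nlinarith [sq_nonneg (η - t), sq_nonneg (η + t)]
    positivity
  refine (norm_integral_le_of_norm_le (((integrable_const η).add (g2.const_mul η⁻¹)).const_mul (L : ℝ))
    (Eventually.of_forall hb)).trans ?_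
  simp only [Pi.add_apply]
  rw [integral_const_mul, integral_add (integrable_const η) (g2.const_mul η⁻¹), integral_const_mul]
  simp only [integral_const, probReal_univ, one_smul]
  have : η⁻¹ * ∫ ξ, ‖ξ - V.starProjection ξ‖ ^ 2 ∂ν ≤ η⁻¹ * η ^ 2 := by gcongr
  have e : η⁻¹ * η ^ 2 = η := by field_simp
  rw [e] at this
  have := mul_le_mul_of_nonneg_left (add_le_add_right this η) L.2
  calc _ ≤ _ := this
    _ = _ := by simp; ring

lemma conv_weak [CompleteSpace H] (μ : ℕ → ProbabilityMeasure H) (μ' : ProbabilityMeasure H)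
    (hμ : ∀ n, Integrable (fun ξ => ‖ξ‖ ^ 2) (μ n : Measure H))
    (hμ' : Integrable (fun ξ => ‖ξ‖ ^ 2) (μ' : Measure H))
    (hx : ∀ u, Tendsto (fun n => charFun (μ n : Measure H) u) atTop (𝓝 (charFun μ' u)))
    (hs : Tendsto (fun n => ∫ ξ, ‖ξ‖ ^ 2 ∂(μ n : Measure H)) atTop
      (𝓝 (∫ ξ, ‖ξ‖ ^ 2 ∂(μ' : Measure H)))) :
    Tendsto μ atTop (𝓝 μ') := by
  rw [tendsto_iff_forall_lipschitz_integral_tendsto]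
  rintro f ⟨C, hC⟩ ⟨L, hL⟩
  have hC' : ∀ x, ‖f x‖ ≤ ‖f 0‖ + C := by
    intro x
    have := hC x 0
    rw [dist_eq_norm] at this
    have h2 := norm_le_insert' (f x) (f 0)
    linarith
  rw [Metric.tendsto_atTop]
  intro ε hε
  set η : ℝ := ε / (8 * (L + 1)) with hη
  have hη0 : 0 < η := by positivity
  have hLη : 2 * L * η ≤ ε / 4 := by
    rw [hη]
    have : (0:ℝ) ≤ L := L.2
    rw [mul_div_assoc', div_le_div_iff₀ (by positivity) (by norm_num)]
    nlinarith
  obtain ⟨V, hV, h1, h2⟩ := tail_small (fun n => (μ n : Measure H)) μ' hμ hμ' hx hs (η ^ 2) (by positivity)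
  have h3 := conv_fd (fun n => (μ n : Measure H)) μ' hx V f hL.continuous _ hC'
  have h4 := (Metric.tendsto_nhds.1 h3) (ε / 4) (by linarith)
  obtain ⟨N, hN⟩ := eventually_atTop.1 (h2.and h4)
  refine ⟨N, fun n hn => ?_⟩
  obtain ⟨g1, g2⟩ := hN n hn
  have b1 := lip_bound _ V (hμ n) f L hL _ hC' η hη0 g1
  have b2 := lip_bound _ V hμ' f L hL _ hC' η hη0 h1
  rw [Real.dist_eq] at g2 ⊢
  rw [abs_le] at b1 b2
  rw [abs_lt] at g2 ⊢
  constructor <;> linarith [b1.1, b1.2, b2.1, b2.2, g2.1, g2.2]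

end Weak

section Coupling

lemma exists_matrix {ι : Type*} [Fintype ι] [DecidableEq ι] (a b : ι → ℝ) (ha : ∀ i, 0 ≤ a i)
    (hb : ∀ i, 0 ≤ b i) (hab : ∑ i, a i = ∑ i, b i) :
    ∃ w : ι → ι → ℝ, (∀ i j, 0 ≤ w i j) ∧ (∀ i, ∑ j, w i j = a i) ∧ (∀ j, ∑ i, w i j = b j) ∧
      ∀ i, min (a i) (b i) ≤ w i i := by
  set m : ι → ℝ := fun i => min (a i) (b i) with hm
  have hma : ∀ i, 0 ≤ a i - m i := fun i => sub_nonneg.2 (min_le_left _ _)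
  have hmb : ∀ i, 0 ≤ b i - m i := fun i => sub_nonneg.2 (min_le_right _ _)
  have hm0 : ∀ i, 0 ≤ m i := fun i => le_min (ha i) (hb i)
  set S : ℝ := ∑ i, (a i - m i) with hS
  have hS' : S = ∑ i, (b i - m i) := by
    rw [hS, Finset.sum_sub_distrib, Finset.sum_sub_distrib, hab]
  have hS0 : 0 ≤ S := Finset.sum_nonneg fun i _ => hma i
  have hpos : ∀ i j, 0 ≤ (a i - m i) * (b j - m j) / S := fun i j =>
    div_nonneg (mul_nonneg (hma i) (hmb j)) hS0
  refine ⟨fun i j => (if i = j then m i else 0) + (a i - m i) * (b j - m j) / S, ?_, ?_, ?_, ?_⟩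
  · intro i j
    have := hpos i j
    have := hm0 i
    dsimp only
    split_ifs <;> linarith
  · intro i
    rw [Finset.sum_add_distrib, ← Finset.sum_div, ← Finset.mul_sum, ← hS']
    simp only [Finset.sum_ite_eq, Finset.mem_univ, if_true]
    by_cases h : S = 0
    · have := (Finset.sum_eq_zero_iff_of_nonneg (fun i _ => hma i)).1 h i (Finset.mem_univ i)
      rw [this]; simp; linarith
    · rw [mul_div_cancel_right₀ _ h]; ring
  · intro j
    rw [Finset.sum_add_distrib, ← Finset.sum_div, ← Finset.sum_mul, ← hS]
    simp only [Finset.sum_ite_eq', Finset.mem_univ, if_true]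
    by_cases h : S = 0
    · have := (Finset.sum_eq_zero_iff_of_nonneg (fun i _ => hmb i)).1 (hS'.symm.trans h) j
        (Finset.mem_univ j)
      rw [this]; simp; linarith
    · rw [mul_div_cancel_left₀ _ h]; ring
  · intro i
    have := hpos i i
    simp only [if_true]
    linarith

variable {Ω : Type*} [MeasurableSpace Ω]

lemma sum_partition {ι : Type*} [Fintype ι] (α : Measure Ω) (A : ι → Set Ω)
    (hA : ∀ i, MeasurableSet (A i)) (hd : Pairwise (Function.onFun Disjoint A))
    (hu : ⋃ i, A i = Set.univ) {s : Set Ω} (hs : MeasurableSet s) :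
    ∑ i, α (A i ∩ s) = α s := by
  rw [← tsum_fintype (L := .unconditional ι), ← measure_iUnion (fun i j hij => ((hd hij).mono Set.inter_subset_left Set.inter_subset_left))
    (fun i => (hA i).inter hs), ← Set.iUnion_inter, hu, Set.univ_inter]

open ProbabilityTheory in
lemma coupling_aux {ι : Type*} [Fintype ι] [DecidableEq ι] (α β : Measure Ω) [IsProbabilityMeasure α]
    [IsProbabilityMeasure β] (A : ι → Set Ω)
    (hA : ∀ i, MeasurableSet (A i)) (hd : Pairwise (Function.onFun Disjoint A))
    (hu : ⋃ i, A i = Set.univ) (I : Finset ι) (G : Set (Ω × Ω)) 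
    (hG : ∀ i ∈ I, A i ×ˢ A i ⊆ G) :
    ∃ π : Measure (Ω × Ω), π.map Prod.fst = α ∧ π.map Prod.snd = β ∧
      ENNReal.ofReal (∑ i ∈ I, min (α.real (A i)) (β.real (A i))) ≤ π G := by
  have hsum : ∀ (γ : Measure Ω) [IsProbabilityMeasure γ], ∑ i, γ.real (A i) = 1 := by
    intro γ _
    have := sum_partition γ A hA hd hu MeasurableSet.univ
    simp only [Set.inter_univ, measure_univ] at this
    simp only [measureReal_def]
    rw [← ENNReal.toReal_sum (fun i _ => measure_ne_top _ _), this]; simp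
  obtain ⟨w, hw0, hwa, hwb, hwm⟩ := exists_matrix (fun i => α.real (A i)) (fun i => β.real (A i))
    (fun i => measureReal_nonneg) (fun i => measureReal_nonneg) ((hsum α).trans (hsum β).symm)
  have ha : ∀ i j, ENNReal.ofReal (w i j) * α[|A i] Set.univ = ENNReal.ofReal (w i j) := by
    intro i j
    by_cases h : α (A i) = 0
    · have : w i j ≤ 0 := by
        have h2 := hwa i
        simp only [measureReal_def, h, ENNReal.toReal_zero] at h2
        rw [← h2]
        exact Finset.single_le_sum (f := fun j => w i j) (fun j _ => hw0 i j) (Finset.mem_univ j)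
      rw [ENNReal.ofReal_eq_zero.2 this, zero_mul]
    · have := cond_isProbabilityMeasure h
      rw [measure_univ, mul_one]
  have hb : ∀ i j, ENNReal.ofReal (w i j) * β[|A j] Set.univ = ENNReal.ofReal (w i j) := by
    intro i j
    by_cases h : β (A j) = 0
    · have : w i j ≤ 0 := by
        have h2 := hwb j
        simp only [measureReal_def, h, ENNReal.toReal_zero] at h2
        rw [← h2]
        exact Finset.single_le_sum (f := fun i => w i j) (fun i _ => hw0 i j) (Finset.mem_univ i)
      rw [ENNReal.ofReal_eq_zero.2 this, zero_mul]
    · have := cond_isProbabilityMeasure h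
      rw [measure_univ, mul_one]
  have hc : ∀ (γ : Measure Ω) [IsProbabilityMeasure γ] (i : ι) (s : Set Ω),
      ENNReal.ofReal (γ.real (A i)) * γ[|A i] s = γ (A i ∩ s) := by
    intro γ _ i s
    rw [ofReal_measureReal, mul_comm, cond_mul_eq_inter (hA i)]
  refine ⟨∑ i, ∑ j, ENNReal.ofReal (w i j) • (α[|A i]).prod (β[|A j]), ?_, ?_, ?_⟩
  · ext s hs
    rw [Measure.map_apply measurable_fst hs, ← Set.prod_univ]
    simp only [Measure.coe_finset_sum, Finset.sum_apply, Measure.smul_apply, Measure.prod_prod,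
      smul_eq_mul]
    rw [← sum_partition α A hA hd hu hs]
    refine Finset.sum_congr rfl fun i _ => ?_
    rw [← hc, ← hwa i, ENNReal.ofReal_sum_of_nonneg (fun j _ => hw0 i j), Finset.sum_mul]
    refine Finset.sum_congr rfl fun j _ => ?_
    rw [mul_comm (α[|A i] s), ← mul_assoc, hb]
  · ext s hs
    rw [Measure.map_apply measurable_snd hs, ← Set.univ_prod]
    simp only [Measure.coe_finset_sum, Finset.sum_apply, Measure.smul_apply, Measure.prod_prod,
      smul_eq_mul]
    rw [← sum_partition β A hA hd hu hs, Finset.sum_comm]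
    refine Finset.sum_congr rfl fun j _ => ?_
    rw [← hc, ← hwb j, ENNReal.ofReal_sum_of_nonneg (fun i _ => hw0 i j), Finset.sum_mul]
    refine Finset.sum_congr rfl fun i _ => ?_
    rw [← mul_assoc, ha]
  · simp only [Measure.coe_finset_sum, Finset.sum_apply, Measure.smul_apply, smul_eq_mul]
    rw [ENNReal.ofReal_sum_of_nonneg (fun i _ => le_min measureReal_nonneg measureReal_nonneg)]
    refine le_trans (Finset.sum_le_sum fun i hi => ?_)
      (Finset.sum_le_sum_of_subset (Finset.subset_univ I))
    refine le_trans ?_ (Finset.single_le_sum (f := fun j => ENNReal.ofReal (w i j) *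
      ((α[|A i]).prod (β[|A j])) G) (fun j _ => zero_le) (Finset.mem_univ i))
    refine (ENNReal.ofReal_le_ofReal (hwm i)).trans ?_
    refine le_trans ?_ (mul_le_mul_right (measure_mono (hG i hi)) _)
    rw [Measure.prod_prod, ← mul_assoc]
    have h1 : α[|A i] (A i) = α[|A i] Set.univ := by
      rw [cond_apply (hA i), cond_apply (hA i)]; simp
    have h2 : β[|A i] (A i) = β[|A i] Set.univ := by
      rw [cond_apply (hA i), cond_apply (hA i)]; simp
    rw [h1, h2, ha, hb]

lemma coupling {k : ℕ} (α β : Measure Ω) [IsProbabilityMeasure α]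
    [IsProbabilityMeasure β] (A : Fin k → Set Ω)
    (hA : ∀ i, MeasurableSet (A i)) (hd : Pairwise (Function.onFun Disjoint A))
    (G : Set (Ω × Ω)) (hG : ∀ i, A i ×ˢ A i ⊆ G) :
    ∃ π : Measure (Ω × Ω), π.map Prod.fst = α ∧ π.map Prod.snd = β ∧
      ENNReal.ofReal (∑ i, min (α.real (A i)) (β.real (A i))) ≤ π G := by
  have q1 : ∀ o : Option (Fin k), MeasurableSet (o.elim (⋃ i, A i)ᶜ A) := by
    rintro (_ | i)
    · exact (MeasurableSet.iUnion hA).compl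
    · exact hA i
  have q2 : Pairwise (Function.onFun Disjoint (fun o : Option (Fin k) => o.elim (⋃ i, A i)ᶜ A)) := by
    rintro (_ | i) (_ | j) hij
    · exact absurd rfl hij
    · exact (disjoint_compl_left (a := ⋃ i, A i)).mono_right (Set.subset_iUnion A j)
    · exact (disjoint_compl_right (a := ⋃ i, A i)).mono_left (Set.subset_iUnion A i)
    · exact hd (fun h => hij (by rw [h]))
  have q3 : ⋃ o : Option (Fin k), o.elim (⋃ i, A i)ᶜ A = Set.univ := by
    rw [Set.eq_univ_iff_forall]
    intro x
    by_cases hx : x ∈ ⋃ i, A i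
    · obtain ⟨i, hi⟩ := Set.mem_iUnion.1 hx
      exact Set.mem_iUnion.2 ⟨some i, hi⟩
    · exact Set.mem_iUnion.2 ⟨none, hx⟩
  obtain ⟨π, h1, h2, h3⟩ := coupling_aux α β (fun o : Option (Fin k) => o.elim (⋃ i, A i)ᶜ A) q1 q2 q3
    (Finset.univ.map Function.Embedding.some) G (by
      intro o ho
      simp only [Finset.mem_map, Finset.mem_univ, true_and] at ho
      obtain ⟨i, rfl⟩ := ho
      exact hG i)
  refine ⟨π, h1, h2, ?_⟩
  simpa using h3

lemma exists_cells {X : Type*} [PseudoMetricSpace X] [MeasurableSpace X] [BorelSpace X]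
    [TopologicalSpace.SeparableSpace X] [Nonempty X] (μ : Measure X) [IsProbabilityMeasure μ]
    (δ ε : ℝ) (hδ : 0 < δ) (hε : 0 < ε) :
    ∃ k : ℕ, ∃ A : Fin k → Set X, (∀ i, MeasurableSet (A i)) ∧
      Pairwise (Function.onFun Disjoint A) ∧ (∀ i, μ (frontier (A i)) = 0) ∧
      (∀ i, ∀ x ∈ A i, ∀ y ∈ A i, dist x y ≤ δ) ∧ 1 - ε < ∑ i, μ.real (A i) := by
  have hr : ∀ i : ℕ, ∃ r ∈ Set.Ioo (δ / 4) (δ / 2),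
      μ (frontier (Metric.thickening r {TopologicalSpace.denseSeq X i})) = 0 := fun i =>
    exists_null_frontier_thickening μ _ (by linarith)
  choose r hr hfr using hr
  set B : ℕ → Set X := fun i => Metric.ball (TopologicalSpace.denseSeq X i) (r i) with hB
  have hfB : ∀ i, μ (frontier (B i)) = 0 := by
    intro i; have := hfr i; rwa [Metric.thickening_singleton] at this
  have hU : ⋃ i, B i = Set.univ := by
    rw [Set.eq_univ_iff_forall]
    intro x
    obtain ⟨i, hi⟩ := (TopologicalSpace.denseRange_denseSeq X).exists_dist_lt x
      (show (0:ℝ) < δ / 4 by linarith)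
    exact Set.mem_iUnion.2 ⟨i, Metric.mem_ball.2 (hi.trans (hr i).1)⟩
  have hm : ∀ i, MeasurableSet (disjointed B i) := fun i =>
    MeasurableSet.disjointed (fun i => measurableSet_ball) i
  have hdis := disjoint_disjointed B
  have hs : HasSum (fun i => μ (disjointed B i)) 1 := by
    have := measure_iUnion (μ := μ) hdis hm
    rw [iUnion_disjointed, hU, measure_univ] at this
    rw [this]
    exact ENNReal.summable.hasSum
  have ht : Tendsto (fun k => ∑ i ∈ Finset.range k, μ.real (disjointed B i)) atTop (𝓝 1) := by
    have := (ENNReal.tendsto_toReal (ENNReal.one_ne_top)).comp hs.tendsto_sum_nat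
    simp only [ENNReal.toReal_one] at this
    refine this.congr fun k => ?_
    simp only [Function.comp, measureReal_def]
    rw [ENNReal.toReal_sum (fun i _ => measure_ne_top _ _)]
  obtain ⟨k, hk⟩ := (ht.eventually_const_lt (u := 1 - ε) (by linarith)).exists
  refine ⟨k, fun i => disjointed B i, fun i => hm i, ?_, ?_, ?_, ?_⟩
  · intro i j hij
    exact hdis (fun h => hij (Fin.ext h))
  · intro i
    refine disjointedRec (p := fun s => μ (frontier s) = 0) (fun t j ht => ?_) (hfB i)
    refine measure_mono_null ?_ (measure_union_null ht (hfB j))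
    rw [Set.sdiff_eq]
    refine (frontier_inter_subset _ _).trans ?_
    rw [frontier_compl]
    exact Set.union_subset_union Set.inter_subset_left Set.inter_subset_right
  · intro i x hx y hy
    have h1 := Metric.mem_ball.1 (disjointed_subset B i hx)
    have h2 := Metric.mem_ball.1 (disjointed_subset B i hy)
    have h3 := dist_triangle_right x y (TopologicalSpace.denseSeq X i)
    linarith [(hr i).2]
  · rwa [Fin.sum_univ_eq_sum_range (fun i => μ.real (disjointed B i))]

end Coupling

section Final
variable {H : Type*} [NormedAddCommGroup H] [MeasurableSpace H]
  [BorelSpace H] [TopologicalSpace.SeparableSpace H]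

lemma nnnorm_rpow_two (y : H) : ((‖y‖₊ : ℝ≥0∞)) ^ (2 : ℝ) = ENNReal.ofReal (‖y‖ ^ 2) := by
  rw [ENNReal.ofReal_pow (norm_nonneg _), ofReal_norm, ← ENNReal.rpow_natCast]
  rfl

lemma cost_bound (α β : Measure H) [IsProbabilityMeasure α] [IsProbabilityMeasure β]
    (hα : Integrable (fun ξ => ‖ξ‖ ^ 2) α) (hβ : Integrable (fun ξ => ‖ξ‖ ^ 2) β)
    {k : ℕ} (A : Fin k → Set H) (hA : ∀ i, MeasurableSet (A i))
    (hd : Pairwise (Function.onFun Disjoint A)) (δ : ℝ)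
    (hδ : ∀ i, ∀ x ∈ A i, ∀ y ∈ A i, dist x y ≤ δ) (R : ℕ) :
    wassersteinDist 2 α β ^ 2 ≤ 
      δ ^ 2 + 4 * R * (1 - ∑ i, min (α.real (A i)) (β.real (A i)))
        + 2 * (∫ ξ, ‖ξ‖ ^ 2 ∂α - ∫ ξ, min (‖ξ‖ ^ 2) R ∂α)
        + 2 * (∫ ξ, ‖ξ‖ ^ 2 ∂β - ∫ ξ, min (‖ξ‖ ^ 2) R ∂β) := by
  set G : Set (H × H) := {q | dist q.1 q.2 ≤ δ} with hGdef
  have hGm : MeasurableSet G := (isClosed_le (by fun_prop) (by fun_prop)).measurableSet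
  obtain ⟨π, h1, h2, h3⟩ := coupling α β A hA hd G (by
    rintro i ⟨x, y⟩ ⟨hx, hy⟩
    exact hδ i x hx y hy)
  have hπ : IsProbabilityMeasure π := by
    constructor
    rw [← Set.preimage_univ (f := Prod.fst), ← Measure.map_apply measurable_fst MeasurableSet.univ, h1,
      measure_univ]
  have hGr : ∑ i, min (α.real (A i)) (β.real (A i)) ≤ π.real G := by
    rw [measureReal_def]
    exact (ENNReal.ofReal_le_iff_le_toReal (measure_ne_top _ _)).1 h3
  set T : H → ℝ := fun ξ => ‖ξ‖ ^ 2 - min (‖ξ‖ ^ 2) R with hT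
  have hT0 : ∀ ξ, 0 ≤ T ξ := fun ξ => sub_nonneg.2 (min_le_left _ _)
  have hTR : ∀ ξ, ‖ξ‖ ^ 2 ≤ R + T ξ := fun ξ => by
    have := min_le_right (‖ξ‖ ^ 2) (R : ℝ)
    simp only [hT]; linarith
  have hTm : Measurable T := by fun_prop
  have iα : Integrable T α := hα.sub (hα.inf (integrable_const _))
  have iβ : Integrable T β := hβ.sub (hβ.inf (integrable_const _))
  have jα : Integrable (fun q : H × H => T q.1) π := by
    rw [← h1] at iα
    exact (integrable_map_measure (by fun_prop) (by fun_prop)).1 iα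
  have jβ : Integrable (fun q : H × H => T q.2) π := by
    rw [← h2] at iβ
    exact (integrable_map_measure (by fun_prop) (by fun_prop)).1 iβ
  have eα : ∫ q : H × H, T q.1 ∂π = ∫ ξ, ‖ξ‖ ^ 2 ∂α - ∫ ξ, min (‖ξ‖ ^ 2) R ∂α := by
    have m : Integrable (fun ξ => min (‖ξ‖ ^ 2) (R : ℝ)) α := hα.inf (integrable_const _)
    have e : ∫ q : H × H, T q.1 ∂π = ∫ ξ, T ξ ∂α := by
      rw [← h1, integral_map (by fun_prop) (by fun_prop)]
    rw [e, ← integral_sub hα m]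
  have eβ : ∫ q : H × H, T q.2 ∂π = ∫ ξ, ‖ξ‖ ^ 2 ∂β - ∫ ξ, min (‖ξ‖ ^ 2) R ∂β := by
    have m : Integrable (fun ξ => min (‖ξ‖ ^ 2) (R : ℝ)) β := hβ.inf (integrable_const _)
    have e : ∫ q : H × H, T q.2 ∂π = ∫ ξ, T ξ ∂β := by
      rw [← h2, integral_map (by fun_prop) (by fun_prop)]
    rw [e, ← integral_sub hβ m]
  have i1 : Integrable (Gᶜ.indicator (1 : H × H → ℝ)) π :=
    (integrable_const (1 : ℝ)).indicator hGm.compl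
  set g : H × H → ℝ := fun q => δ ^ 2 + 4 * R * Gᶜ.indicator (1 : H × H → ℝ) q + 2 * T q.1 + 2 * T q.2 with hg
  have hpt : ∀ q : H × H, ‖q.1 - q.2‖ ^ 2 ≤ g q := by
    rintro ⟨x, y⟩
    have a1 := hT0 x
    have a2 := hT0 y
    by_cases hq : (x, y) ∈ G
    · have h5 : ‖x - y‖ ≤ δ := by rw [← dist_eq_norm]; exact hq
      have : Gᶜ.indicator (1 : H × H → ℝ) (x, y) = 0 := Set.indicator_of_notMem (by simpa using hq) _
      simp only [hg, this]
      nlinarith [norm_nonneg (x - y)]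
    · have : Gᶜ.indicator (1 : H × H → ℝ) (x, y) = 1 := Set.indicator_of_mem (by simpa using hq) _
      simp only [hg, this]
      nlinarith [norm_sub_le x y, norm_nonneg (x - y), sq_nonneg (‖x‖ - ‖y‖), hTR x, hTR y, sq_nonneg δ]
  have ig : Integrable g π :=
    (((integrable_const _).add (i1.const_mul _)).add (jα.const_mul 2)).add (jβ.const_mul 2)
  have hg0 : ∀ q, 0 ≤ g q := fun q => (sq_nonneg _).trans (hpt q)
  have hgi : ∫ q, g q ∂π = δ ^ 2 + 4 * R * (1 - π.real G)
        + 2 * (∫ ξ, ‖ξ‖ ^ 2 ∂α - ∫ ξ, min (‖ξ‖ ^ 2) R ∂α)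
        + 2 * (∫ ξ, ‖ξ‖ ^ 2 ∂β - ∫ ξ, min (‖ξ‖ ^ 2) R ∂β) := by
    have k1 : Integrable (fun q : H × H => δ ^ 2 + 4 * R * Gᶜ.indicator (1 : H × H → ℝ) q) π :=
      (integrable_const _).add (i1.const_mul _)
    have k2 : Integrable (fun q : H × H => δ ^ 2 + 4 * R * Gᶜ.indicator (1 : H × H → ℝ) q + 2 * T q.1) π :=
      k1.add (jα.const_mul 2)
    simp only [hg]
    rw [integral_add k2 (jβ.const_mul 2), integral_add k1 (jα.const_mul 2),
      integral_add (integrable_const _) (i1.const_mul _), integral_const_mul, integral_const_mul,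
      integral_const_mul, eα, eβ, integral_indicator_one hGm.compl, probReal_compl_eq_one_sub hGm]
    simp
  have hle : (⨅ π ∈ {π : Measure (H × H) | π.map Prod.fst = α ∧ π.map Prod.snd = β},
      ∫⁻ q, (‖q.1 - q.2‖₊ : ℝ≥0∞) ^ (2 : ℝ) ∂π) ≤ ENNReal.ofReal (∫ q, g q ∂π) := by
    refine (iInf₂_le π ⟨h1, h2⟩).trans ?_
    rw [ofReal_integral_eq_lintegral_ofReal ig (Eventually.of_forall hg0)]
    refine lintegral_mono fun q => ?_
    rw [nnnorm_rpow_two]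
    exact ENNReal.ofReal_le_ofReal (hpt q)
  unfold wassersteinDist
  rw [← Real.sqrt_eq_rpow, Real.sq_sqrt ENNReal.toReal_nonneg]
  refine (ENNReal.toReal_le_of_le_ofReal (integral_nonneg hg0) hle).trans ?_
  rw [hgi]
  gcongr

lemma conv_wass (μ : ℕ → ProbabilityMeasure H) (μ' : ProbabilityMeasure H)
    (hμ : ∀ n, Integrable (fun ξ => ‖ξ‖ ^ 2) (μ n : Measure H))
    (hμ' : Integrable (fun ξ => ‖ξ‖ ^ 2) (μ' : Measure H))
    (hw : Tendsto μ atTop (𝓝 μ'))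
    (hs : Tendsto (fun n => ∫ ξ, ‖ξ‖ ^ 2 ∂(μ n : Measure H)) atTop
      (𝓝 (∫ ξ, ‖ξ‖ ^ 2 ∂(μ' : Measure H)))) :
    Tendsto (fun n => wassersteinDist 2 (μ n : Measure H) (μ' : Measure H)) atTop (𝓝 0) := by
  have hnn : ∀ n, 0 ≤ wassersteinDist 2 (μ n : Measure H) (μ' : Measure H) := fun n =>
    Real.rpow_nonneg ENNReal.toReal_nonneg _
  rw [Metric.tendsto_atTop]
  intro r hr
  set ε := r ^ 2 with hε
  have hε0 : 0 < ε := by positivity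
  obtain ⟨R, hR⟩ := ((trunc_tendsto hμ' (fun x => by positivity)).eventually_const_lt
    (u := ∫ ξ, ‖ξ‖ ^ 2 ∂(μ' : Measure H) - ε / 16) (by linarith)).exists
  set ε' := ε / (32 * (R + 1)) with hε'
  have hε'0 : 0 < ε' := by positivity
  have hRε : 4 * R * ε' ≤ ε / 8 := by
    rw [hε', mul_div_assoc', div_le_div_iff₀ (by positivity) (by norm_num)]
    have : (0:ℝ) ≤ R := by positivity
    nlinarith
  obtain ⟨k, A, hA, hd, hf, hδ, hsum⟩ := exists_cells (μ' : Measure H) (r / 4) ε' (by linarith) hε'0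
  have hmin : Tendsto (fun n => ∑ i, min ((μ n : Measure H).real (A i)) ((μ' : Measure H).real (A i)))
      atTop (𝓝 (∑ i, min ((μ' : Measure H).real (A i)) ((μ' : Measure H).real (A i)))) := by
    refine tendsto_finsetSum _ fun i _ => ?_
    refine Tendsto.min ?_ tendsto_const_nhds
    exact (ENNReal.tendsto_toReal (measure_ne_top _ _)).comp
      (ProbabilityMeasure.tendsto_measure_of_null_frontier_of_tendsto' hw (hf i))
  simp only [min_self] at hmin
  have hT := conv_bdd hw (fun ξ => min (‖ξ‖ ^ 2) R) (by fun_prop) R (fun x => by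
    rw [Real.norm_eq_abs, abs_of_nonneg (by positivity)]; exact min_le_right _ _)
  have hT2 := (hs.sub hT).eventually_lt_const (u := ε / 16) (by linarith)
  obtain ⟨N, hN⟩ := eventually_atTop.1 (hT2.and (hmin.eventually_const_lt hsum))
  refine ⟨N, fun n hn => ?_⟩
  obtain ⟨g1, g2⟩ := hN n hn
  have hb := cost_bound (μ n : Measure H) (μ' : Measure H) (hμ n) hμ' A hA hd (r / 4) hδ R
  rw [Real.dist_eq, sub_zero, abs_of_nonneg (hnn n)]
  refine lt_of_pow_lt_pow_left₀ 2 hr.le ?_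
  have : 4 * R * (1 - ∑ i, min ((μ n : Measure H).real (A i)) ((μ' : Measure H).real (A i))) ≤
      4 * R * ε' := by
    gcongr
    linarith
  have : (r / 4) ^ 2 = ε / 16 := by rw [hε]; ring
  linarith

/-- auxiliary distance to a pair of points -/
noncomputable def pairDist (x : Fin 2 → H) (ξ : H) : ℝ≥0∞ := ⨅ i, (‖ξ - x i‖₊ : ℝ≥0∞)

lemma pairDist_rpow (x : Fin 2 → H) (ξ : H) :
    ⨅ i, (‖ξ - x i‖₊ : ℝ≥0∞) ^ (2 : ℝ) = pairDist x ξ ^ (2 : ℝ) := by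
  unfold pairDist
  have := (ENNReal.orderIsoRpow 2 (by norm_num)).map_iInf (fun i => (‖ξ - x i‖₊ : ℝ≥0∞))
  simpa only [ENNReal.orderIsoRpow_apply] using this.symm

lemma pairDist_meas (x : Fin 2 → H) : Measurable (pairDist x) := by
  unfold pairDist
  refine Measurable.iInf fun i => ?_
  fun_prop

lemma pairDist_le (x : Fin 2 → H) (ξ η : H) :
    pairDist x ξ ≤ pairDist x η + (‖ξ - η‖₊ : ℝ≥0∞) := by
  unfold pairDist
  rw [ENNReal.iInf_add]
  refine le_iInf fun i => (iInf_le _ i).trans ?_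
  rw [← ENNReal.coe_add, ENNReal.coe_le_coe]
  calc ‖ξ - x i‖₊ = ‖(η - x i) + (ξ - η)‖₊ := by congr 1; abel
    _ ≤ _ := nnnorm_add_le _ _

lemma mink (x : Fin 2 → H) (π : Measure (H × H)) (f g : H × H → H) (hf : Measurable f) (hg : Measurable g) :
    (∫⁻ q, pairDist x (f q) ^ (2 : ℝ) ∂π) ^ (1 / 2 : ℝ) ≤
      (∫⁻ q, pairDist x (g q) ^ (2 : ℝ) ∂π) ^ (1 / 2 : ℝ) +
      (∫⁻ q, (‖f q - g q‖₊ : ℝ≥0∞) ^ (2 : ℝ) ∂π) ^ (1 / 2 : ℝ) := by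
  have hm : Measurable fun q => (‖f q - g q‖₊ : ℝ≥0∞) := by fun_prop
  refine le_trans ?_ (ENNReal.lintegral_Lp_add_le (p := 2) ((pairDist_meas x).comp hg).aemeasurable
    hm.aemeasurable (by norm_num))
  refine ENNReal.rpow_le_rpow (lintegral_mono fun q => ?_) (by norm_num)
  exact ENNReal.rpow_le_rpow (pairDist_le x _ _) (by norm_num)

lemma err_fin (x : Fin 2 → H) (μ : Measure H) [IsProbabilityMeasure μ] (hμ : HasFiniteMoment 2 μ) :
    (∫⁻ ξ, pairDist x ξ ^ (2 : ℝ) ∂μ) ≠ ∞ := by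
  refine ne_of_lt (lt_of_le_of_lt (lintegral_mono (g := fun ξ => ENNReal.ofReal (‖ξ - x 0‖ ^ 2)) fun ξ => ?_) ?_)
  · dsimp only
    rw [← nnnorm_rpow_two]
    exact ENNReal.rpow_le_rpow (iInf_le _ 0) (by norm_num)
  · have := (integrable_sub_sq (integrable_sq_norm hμ) (x 0)).2
    rwa [hasFiniteIntegral_iff_ofReal (Eventually.of_forall fun ξ => by positivity)] at this

lemma wass_fin (μ ν : Measure H) [IsProbabilityMeasure μ] [IsProbabilityMeasure ν]
    (hμ : HasFiniteMoment 2 μ) (hν : HasFiniteMoment 2 ν) :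
    (⨅ π ∈ {π : Measure (H × H) | π.map Prod.fst = μ ∧ π.map Prod.snd = ν},
      ∫⁻ q, (‖q.1 - q.2‖₊ : ℝ≥0∞) ^ (2 : ℝ) ∂π) ≠ ∞ := by
  refine ne_of_lt (lt_of_le_of_lt (iInf₂_le (μ.prod ν) (by simp)) ?_)
  simp_rw [nnnorm_rpow_two]
  rw [← hasFiniteIntegral_iff_ofReal (Eventually.of_forall fun ξ => by positivity)]
  have h1 : Integrable (fun q : H × H => ‖q.1‖ ^ 2) (μ.prod ν) := (integrable_sq_norm hμ).comp_fst ν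
  have h2 : Integrable (fun q : H × H => ‖q.2‖ ^ 2) (μ.prod ν) := (integrable_sq_norm hν).comp_snd μ
  refine (((h1.const_mul 2).add (h2.const_mul 2)).mono' (by fun_prop) (Eventually.of_forall fun q => ?_)).2
  simp only [Pi.add_apply, Real.norm_eq_abs, abs_pow, abs_norm]
  nlinarith [norm_sub_le q.1 q.2, norm_nonneg (q.1 - q.2), norm_nonneg q.1, norm_nonneg q.2,
    sq_nonneg (‖q.1‖ - ‖q.2‖)]

lemma quant_le (μ ν : Measure H) [IsProbabilityMeasure μ] [IsProbabilityMeasure ν]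
    (hμ : HasFiniteMoment 2 μ) (hν : HasFiniteMoment 2 ν) (x : Fin 2 → H) :
    |quantErr 2 2 μ x - quantErr 2 2 ν x| ≤ wassersteinDist 2 μ ν := by
  set W := (⨅ π ∈ {π : Measure (H × H) | π.map Prod.fst = μ ∧ π.map Prod.snd = ν},
      ∫⁻ q, (‖q.1 - q.2‖₊ : ℝ≥0∞) ^ (2 : ℝ) ∂π) with hW
  have hWf : W ≠ ∞ := wass_fin μ ν hμ hν
  set P := (∫⁻ ξ, pairDist x ξ ^ (2 : ℝ) ∂μ) ^ (1 / 2 : ℝ) with hP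
  set Q := (∫⁻ ξ, pairDist x ξ ^ (2 : ℝ) ∂ν) ^ (1 / 2 : ℝ) with hQ
  have hPf : P ≠ ∞ := ENNReal.rpow_ne_top_of_nonneg (by norm_num) (err_fin x μ hμ)
  have hQf : Q ≠ ∞ := ENNReal.rpow_ne_top_of_nonneg (by norm_num) (err_fin x ν hν)
  have hWf' : W ^ (1 / 2 : ℝ) ≠ ∞ := ENNReal.rpow_ne_top_of_nonneg (by norm_num) hWf
  have e1 : quantErr 2 2 μ x = P.toReal := by
    unfold quantErr
    simp_rw [pairDist_rpow]
    rw [hP, ENNReal.toReal_rpow]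
  have e2 : quantErr 2 2 ν x = Q.toReal := by
    unfold quantErr
    simp_rw [pairDist_rpow]
    rw [hQ, ENNReal.toReal_rpow]
  have e3 : wassersteinDist 2 μ ν = (W ^ (1 / 2 : ℝ)).toReal := by
    unfold wassersteinDist
    rw [ENNReal.toReal_rpow]
  have eP : ∀ π : Measure (H × H), π.map Prod.fst = μ →
      P = (∫⁻ q, pairDist x q.1 ^ (2 : ℝ) ∂π) ^ (1 / 2 : ℝ) := by
    intro π h
    rw [hP, ← h, lintegral_map ((pairDist_meas x).pow_const _) measurable_fst]
  have eQ : ∀ π : Measure (H × H), π.map Prod.snd = ν →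
      Q = (∫⁻ q, pairDist x q.2 ^ (2 : ℝ) ∂π) ^ (1 / 2 : ℝ) := by
    intro π h
    rw [hQ, ← h, lintegral_map ((pairDist_meas x).pow_const _) measurable_snd]
  have gen : ∀ D : ℝ≥0∞, (∀ π : Measure (H × H), π.map Prod.fst = μ → π.map Prod.snd = ν →
      D ≤ (∫⁻ q, (‖q.1 - q.2‖₊ : ℝ≥0∞) ^ (2 : ℝ) ∂π) ^ (1 / 2 : ℝ)) → D ≤ W ^ (1 / 2 : ℝ) := by
    intro D hD
    have : D ^ (2 : ℝ) ≤ W := by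
      refine le_iInf₂ fun π hπ => ?_
      have := ENNReal.rpow_le_rpow (hD π hπ.1 hπ.2) (show (0:ℝ) ≤ 2 by norm_num)
      rw [← ENNReal.rpow_mul] at this
      simpa using this
    have := ENNReal.rpow_le_rpow this (show (0:ℝ) ≤ 1 / 2 by norm_num)
    rw [← ENNReal.rpow_mul] at this
    simpa using this
  have A1 : P ≤ Q + W ^ (1 / 2 : ℝ) := by
    rw [← tsub_le_iff_left]
    refine gen _ fun π h1 h2 => ?_
    rw [tsub_le_iff_left, eP π h1, eQ π h2]
    exact mink x π Prod.fst Prod.snd measurable_fst measurable_snd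
  have A2 : Q ≤ P + W ^ (1 / 2 : ℝ) := by
    rw [← tsub_le_iff_left]
    refine gen _ fun π h1 h2 => ?_
    rw [tsub_le_iff_left, eP π h1, eQ π h2]
    have := mink x π Prod.snd Prod.fst measurable_snd measurable_fst
    have e : ∀ q : H × H, ‖q.2 - q.1‖₊ = ‖q.1 - q.2‖₊ := fun q => by rw [← nnnorm_neg, neg_sub]
    simp_rw [e] at this
    exact this
  rw [e1, e2, e3, abs_le]
  have B1 := ENNReal.toReal_mono (ENNReal.add_ne_top.2 ⟨hQf, hWf'⟩) A1
  have B2 := ENNReal.toReal_mono (ENNReal.add_ne_top.2 ⟨hPf, hWf'⟩) A2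
  rw [ENNReal.toReal_add hQf hWf'] at B1
  rw [ENNReal.toReal_add hPf hWf'] at B2
  constructor <;> linarith

end Final

/-- `W₂`-convergence characterization in Hilbert space: for Borel probability
measures with finite second moments on a separable Hilbert space,
`W₂(μ_n, μ_∞) → 0` iff `e_{2,2}(μ_n, ·) → e_{2,2}(μ_∞, ·)` uniformly on `H²` iff
`e_{2,2}(μ_n, ·) → e_{2,2}(μ_∞, ·)` pointwise on `H²`. -/
theorem stmt13 {H : Type*} [NormedAddCommGroup H] [InnerProductSpace ℝ H]
    [CompleteSpace H] [TopologicalSpace.SeparableSpace H]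
    [MeasurableSpace H] [BorelSpace H]
    (μ : ℕ → Measure H) (μ' : Measure H)
    [∀ n, IsProbabilityMeasure (μ n)] [IsProbabilityMeasure μ']
    (hμ : ∀ n, HasFiniteMoment 2 (μ n)) (hμ' : HasFiniteMoment 2 μ') :
    (Tendsto (fun n => wassersteinDist 2 (μ n) μ') atTop (𝓝 0) ↔
      TendstoUniformly (fun n (x : Fin 2 → H) => quantErr 2 2 (μ n) x)
        (quantErr 2 2 μ') atTop) ∧
    (Tendsto (fun n => wassersteinDist 2 (μ n) μ') atTop (𝓝 0) ↔
      ∀ x : Fin 2 → H,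
        Tendsto (fun n => quantErr 2 2 (μ n) x) atTop (𝓝 (quantErr 2 2 μ' x))) := by

  have h12 : Tendsto (fun n => wassersteinDist 2 (μ n) μ') atTop (𝓝 0) →
      TendstoUniformly (fun n (x : Fin 2 → H) => quantErr 2 2 (μ n) x) (quantErr 2 2 μ') atTop := by
    intro h
    rw [Metric.tendstoUniformly_iff]
    intro ε hε
    filter_upwards [h.eventually_lt_const hε] with n hn x
    rw [dist_comm, Real.dist_eq]
    exact (quant_le (μ n) μ' (hμ n) hμ' x).trans_lt hn
  have h31 : (∀ x : Fin 2 → H,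
      Tendsto (fun n => quantErr 2 2 (μ n) x) atTop (𝓝 (quantErr 2 2 μ' x))) →
      Tendsto (fun n => wassersteinDist 2 (μ n) μ') atTop (𝓝 0) := by
    intro h
    have hmin := conv_min μ μ' h
    have hi := fun n => integrable_sq_norm (hμ n)
    have hi' := integrable_sq_norm hμ'
    have hs : Tendsto (fun n => ∫ ξ, ‖ξ‖ ^ 2 ∂(μ n)) atTop (𝓝 (∫ ξ, ‖ξ‖ ^ 2 ∂μ')) := by
      simpa using hmin 0 0
    have hch : ∀ u, Tendsto (fun n => charFun (μ n) u) atTop (𝓝 (charFun μ' u)) := fun u =>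
      conv_charFun μ μ' hi hi' u (conv_max μ μ' hi hi' hmin u)
    let ms : ℕ → ProbabilityMeasure H := fun n => ⟨μ n, inferInstance⟩
    let m' : ProbabilityMeasure H := ⟨μ', inferInstance⟩
    exact conv_wass ms m' hi hi' (conv_weak ms m' hi hi' hch hs) hs
  exact ⟨⟨h12, fun h => h31 fun x => h.tendsto_at x⟩, ⟨fun h x => (h12 h).tendsto_at x, h31⟩⟩
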